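/- Let N ≥ 1, r₁ ≥ 1, sizes s₁,…,s_{r₁} ≥ 1, and complex numbers κ₁,…,κ_{r₁}, κ̄₁,…,κ̄_{r₁} with κ_μ ≠ κ̄_ν for all μ, ν. For each ν let q̄^{(ν)}_i, p^{(ν)}_i ∈ ℂ^N be column vectors and p̄^{(ν)}_i, q^{(ν)}_i row vectors (1 ≤ i ≤ s_ν), and set Γ(k) = I + Σ_ν S̄_ν(k) and Γinv(k) = I + Σ_ν S_ν(k), where S̄_ν is the upper block at κ̄_ν of size s_ν built from q̄^{(ν)}, p̄^{(ν)} and S_ν is the lower block at κ_ν of size s_ν built from p^{(ν)}, q^{(ν)}. Assume: Γ(k)Γinv(k) = I for all k not among the κ_ν, κ̄_ν; for each point κ among the κ_ν the row vectors {q^{(ν)}_1 : κ_ν = κ} are linearly independent; and the m×m matrix K̄ defined in the context is invertible (m = s₁+…+s_{r₁}). Then for every k not among the κ̄_ν, Γ(k) = I − P · K̄^{−1} · 𝒟̄(k) · P̄, where P is the N×m matrix with columns p^{(1)}_1,…,p^{(1)}_{s₁},…,p^{(r₁)}_1,…,p^{(r₁)}_{s_{r₁}}, P̄ is the m×N matrix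 with rows p̄^{(1)}_1,…,p̄^{(1)}_{s₁},…,p̄^{(r₁)}_1,…,p̄^{(r₁)}_{s_{r₁}}, and 𝒟̄(k) is the m×m block-diagonal matrix whose ν-th diagonal block is the s_ν×s_ν matrix D̄_ν(k) with (a,b) entry (k−κ̄_ν)^{−(a−b+1)} for a ≥ b and 0 for a < b. -/

import Mathlib

open Matrix

/-- The "upper block at `κ` of size `s`":
`S̄(k) = Σ_{l=1}^{s} Σ_{j=1}^{l} q_j p_{l+1−j} (k−κ)^{−(s+1−l)}` (columns `q`, rows `p`). -/
noncomputable def upperBlock {N : ℕ} (s : ℕ) (κ : ℂ) (q p : ℕ → Fin N → ℂ) (k : ℂ) :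
    Matrix (Fin N) (Fin N) ℂ :=
  ∑ l ∈ Finset.Icc 1 s, ∑ j ∈ Finset.Icc 1 l,
    (k - κ) ^ (-((s : ℤ) + 1 - (l : ℤ))) • vecMulVec (q j) (p (l + 1 - j))

/-- The "lower block at `κ` of size `s`":
`S(k) = Σ_{l=1}^{s} Σ_{j=1}^{l} p_{l+1−j} q_j (k−κ)^{−(s+1−l)}` (columns `p`, rows `q`). -/
noncomputable def lowerBlock {N : ℕ} (s : ℕ) (κ : ℂ) (p q : ℕ → Fin N → ℂ) (k : ℂ) :
    Matrix (Fin N) (Fin N) ℂ :=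
  ∑ l ∈ Finset.Icc 1 s, ∑ j ∈ Finset.Icc 1 l,
    (k - κ) ^ (-((s : ℤ) + 1 - (l : ℤ))) • vecMulVec (p (l + 1 - j)) (q j)

/-- `H^{(ν)}_{−j}` : the `sν×sν` matrix with `(α,β)` entry `1` when `α = β + j`, else `0`. -/
def Hmat (sν : ℕ) (j : ℕ) : Matrix (Fin sν) (Fin sν) ℂ :=
  Matrix.of fun α β => if (α : ℕ) = (β : ℕ) + j then 1 else 0

/-- `Q̄_l^{(ν,μ)}` : the `sν×sμ` matrix with (1-based) `(a,b)` entry `p̄^{(ν)}_a ⬝ p^{(μ)}_{b−l}`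
when `b > l` and `0` otherwise. -/
noncomputable def Qbar {N : ℕ} (sν sμ : ℕ) (pbν pμ : ℕ → Fin N → ℂ) (l : ℕ) :
    Matrix (Fin sν) (Fin sμ) ℂ :=
  Matrix.of fun a b => if l < (b : ℕ) + 1 then pbν ((a : ℕ) + 1) ⬝ᵥ pμ ((b : ℕ) + 1 - l) else 0

/-- The block `K̄^{(ν,μ)} = Σ_{j,l} ((−1)^l (j+l)!/(j! l!)) H^{(ν)}_{−j} Q̄_l^{(ν,μ)}
(κ_μ − κ̄_ν)^{−(j+l+1)}`. -/
noncomputable def KbarBlock {N : ℕ} (sν sμ : ℕ) (κμ κbν : ℂ) (pbν pμ : ℕ → Fin N → ℂ) :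
    Matrix (Fin sν) (Fin sμ) ℂ :=
  ∑ j ∈ Finset.range sν, ∑ l ∈ Finset.range sμ,
    (((-1 : ℂ) ^ l * (Nat.factorial (j + l) : ℂ) /
        ((Nat.factorial j : ℂ) * (Nat.factorial l : ℂ))) *
      (κμ - κbν) ^ (-((j : ℤ) + (l : ℤ) + 1))) • (Hmat sν j * Qbar sν sμ pbν pμ l)

/-- The `m×m` matrix `K̄` (`m = s₁+…+s_{r₁}`) whose `(ν,μ)` block is `K̄^{(ν,μ)}`. -/
noncomputable def Kbar {N r₁ : ℕ} (s : Fin r₁ → ℕ) (κ κb : Fin r₁ → ℂ)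
    (pb p : Fin r₁ → ℕ → Fin N → ℂ) :
    Matrix ((ν : Fin r₁) × Fin (s ν)) ((ν : Fin r₁) × Fin (s ν)) ℂ :=
  Matrix.of fun x y => KbarBlock (s x.1) (s y.1) (κ y.1) (κb x.1) (pb x.1) (p y.1) x.2 y.2

/-- `𝒟̄(k)` : the block-diagonal matrix whose `ν`-th diagonal block has (0-based) `(a,b)` entry
`(k−κ̄_ν)^{−(a−b+1)}` for `a ≥ b` and `0` for `a < b`. -/
noncomputable def DbarMat {r₁ : ℕ} (s : Fin r₁ → ℕ) (κb : Fin r₁ → ℂ) (k : ℂ) :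
    Matrix ((ν : Fin r₁) × Fin (s ν)) ((ν : Fin r₁) × Fin (s ν)) ℂ :=
  Matrix.of fun x y =>
    if x.1 = y.1 ∧ (y.2 : ℕ) ≤ (x.2 : ℕ) then
      (k - κb x.1) ^ (-(((x.2 : ℕ) : ℤ) - ((y.2 : ℕ) : ℤ) + 1))
    else 0

/-!
Write `Γ(k) = I + B 𝒟̄(k) P̄`, where `B` has the columns `q̄^{(ν)}_{s_ν}, …, q̄^{(ν)}_1`. Put
`p_ν(k) = Σ_l (k - κ_ν)^l p^{(ν)}_{l+1}` and define `q_ν(k)` likewise: up to a polynomial, the lower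
block at `κ_ν` is `(k - κ_ν)^{-s_ν} p_ν(k) q_ν(k)`. Since `Γ` is regular at each `κ_μ`, the identity
`Γ Γinv = I` bounds the sum of `(k - κ_ν)^{-s_ν} Γ(k) p_ν(k) q_ν(k)` over the `ν` with `κ_ν = κ_μ`.
The rows `q_ν(κ_μ) = q^{(ν)}_1` being independent, every term is bounded, so
`Γ(k) p_μ(k) = O((k - κ_μ)^{s_μ})`. The columns of `K̄` are the Taylor coefficients of
`𝒟̄(k) P̄ p_μ(k)` at `κ_μ`, so the vanishing of the first `s_μ` Taylor coefficients of
`Γ(k) p_μ(k)` reads `P + B K̄ = 0`, that is, `B = -P K̄⁻¹`.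
-/

open Asymptotics Filter Topology

theorem eventually_nhdsNE_forall_ne {X ι : Type*} [TopologicalSpace X] [T1Space X] [Finite ι]
    (f : ι → X) (x : X) : ∀ᶠ y in 𝓝[≠] x, ∀ i, y ≠ f i := by
  filter_upwards [(Set.finite_range f).eventually_cofinite_notMem.filter_mono
    (nhdsNE_le_cofinite x)] with y hy i hyi using hy ⟨i, hyi.symm⟩

section Asymptotics

variable {α ι 𝕜 E : Type*} [Fintype ι] [NontriviallyNormedField 𝕜] [CompleteSpace 𝕜]
  [NormedAddCommGroup E] [NormedSpace 𝕜 E] {l : Filter α} {v : α → ι → E} {w : ι → E}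

theorem isBigO_linearCombination_of_tendsto (hv : ∀ i, Tendsto (fun x => v x i) l (𝓝 (w i)))
    (hw : LinearIndependent 𝕜 w) (g : α → ι → 𝕜) : g =O[l] fun x => ∑ i, g x i • v x i := by
  obtain ⟨K, -, hK⟩ := (Fintype.linearCombination 𝕜 w).exists_antilipschitzWith
    (LinearMap.ker_eq_bot.2 (linearIndependent_iff_injective_fintypeLinearCombination.1 hw))
  have hgw : g =O[l] fun x => ∑ i, g x i • w i := by
    refine .of_bound K (.of_forall fun x => ?_)
    simpa [Fintype.linearCombination_apply] using hK.le_mul_dist (g x) 0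
  have hdiff : (fun x => ∑ i, g x i • (v x i - w i)) =o[l] g := by
    refine IsLittleO.fun_sum fun i _ => ?_
    have hvi : (fun x => v x i - w i) =o[l] fun _ => (1 : ℝ) :=
      (isLittleO_one_iff ℝ).2 (tendsto_sub_nhds_zero_iff.2 (hv i))
    have hgi : (fun x => g x i) =O[l] g := isBigO_of_le l fun x => norm_le_pi_norm (g x) i
    refine .of_norm_norm ?_
    simpa [norm_smul] using hgi.norm_norm.mul_isLittleO hvi.norm_norm
  refine hgw.trans ((hdiff.trans_isBigO hgw).right_isBigO_add.congr_right fun x => ?_)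
  simp only [smul_sub, Finset.sum_sub_distrib, sub_add_cancel]

end Asymptotics

section Taylor

variable {𝕜 : Type*} [NontriviallyNormedField 𝕜] {f g : 𝕜 → 𝕜} {n : ℕ} {z₀ : 𝕜}

/-- The `n`-th Taylor coefficient `f⁽ⁿ⁾(z₀) / n!` of `f` at `z₀`. -/
noncomputable def taylorCoeff (n : ℕ) (f : 𝕜 → 𝕜) (z₀ : 𝕜) : 𝕜 :=
  iteratedDeriv n f z₀ / n.factorial

theorem taylorCoeff_add (hf : ContDiffAt 𝕜 n f z₀) (hg : ContDiffAt 𝕜 n g z₀) :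
    taylorCoeff n (fun z => f z + g z) z₀ = taylorCoeff n f z₀ + taylorCoeff n g z₀ := by
  simp only [taylorCoeff, iteratedDeriv_fun_add hf hg, add_div]

theorem taylorCoeff_sum {ι : Type*} {t : Finset ι} {F : ι → 𝕜 → 𝕜}
    (hF : ∀ i ∈ t, ContDiffAt 𝕜 n (F i) z₀) :
    taylorCoeff n (fun z => ∑ i ∈ t, F i z) z₀ = ∑ i ∈ t, taylorCoeff n (F i) z₀ := by
  simp only [taylorCoeff, iteratedDeriv_fun_sum hF, Finset.sum_div]

theorem taylorCoeff_dotProduct {ι : Type*} [Fintype ι] (u : ι → 𝕜) {v : 𝕜 → ι → 𝕜}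
    (hv : ∀ i, ContDiffAt 𝕜 n (fun z => v z i) z₀) :
    taylorCoeff n (fun z => u ⬝ᵥ v z) z₀ = u ⬝ᵥ fun i => taylorCoeff n (fun z => v z i) z₀ := by
  simp only [dotProduct]
  rw [taylorCoeff_sum fun i _ => contDiffAt_const.mul (hv i)]
  simp only [taylorCoeff, iteratedDeriv_const_mul_field, mul_div_assoc]

theorem taylorCoeff_mul [CharZero 𝕜] (hf : ContDiffAt 𝕜 n f z₀) (hg : ContDiffAt 𝕜 n g z₀) :
    taylorCoeff n (fun z => f z * g z) z₀ =
      ∑ l ∈ Finset.range (n + 1), taylorCoeff l f z₀ * taylorCoeff (n - l) g z₀ := by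
  simp only [taylorCoeff, iteratedDeriv_fun_mul hf hg, Finset.sum_div]
  refine Finset.sum_congr rfl fun l hl => ?_
  rw [Nat.cast_choose 𝕜 (Finset.mem_range_succ_iff.1 hl)]
  have hfac (m : ℕ) : (m.factorial : 𝕜) ≠ 0 := Nat.cast_ne_zero.2 m.factorial_ne_zero
  have := hfac n
  field_simp

theorem taylorCoeff_sub_zpow_neg_succ [CharZero 𝕜] (w : 𝕜) (j l : ℕ) :
    taylorCoeff l (fun z => (z - w) ^ (-((j : ℤ) + 1))) z₀ =
      (-1) ^ l * (j + l).factorial / (j.factorial * l.factorial) *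
        (z₀ - w) ^ (-((j : ℤ) + l + 1)) := by
  have hprod : (∏ i ∈ Finset.range l, (((-((j : ℤ) + 1) : ℤ) : 𝕜) - i)) * j.factorial =
      (-1) ^ l * (j + l).factorial := by
    induction l with
    | zero => simp
    | succ l ih =>
      rw [Finset.prod_range_succ, mul_right_comm, ih, ← add_assoc, Nat.factorial_succ, pow_succ]
      push_cast
      ring
  have hfac : (j.factorial : 𝕜) ≠ 0 := Nat.cast_ne_zero.2 j.factorial_ne_zero
  have hexp : -((j : ℤ) + 1) - l = -((j : ℤ) + l + 1) := by ring
  simp only [taylorCoeff, iteratedDeriv_comp_sub_const l (fun z => z ^ (-((j : ℤ) + 1))),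
    iteratedDeriv_eq_iterate, iter_deriv_zpow, ← hprod, hexp]
  field_simp

theorem natCast_le_analyticOrderAt_of_isBigO {s : ℕ} (hf : AnalyticAt 𝕜 f z₀)
    (hO : f =O[𝓝[≠] z₀] fun z => (z - z₀) ^ s) : s ≤ analyticOrderAt f z₀ := by
  by_contra! hlt
  obtain ⟨m, hm⟩ := ENat.ne_top_iff_exists.1 hlt.ne_top
  rw [← hm, Nat.cast_lt] at hlt
  obtain ⟨g, hg, hg₀, hfg⟩ := (hf.analyticOrderAt_eq_natCast).1 hm.symm
  have hgO : g =O[𝓝[≠] z₀] fun z => (z - z₀) ^ (s - m) := by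
    have hdiv := hO.mul (isBigO_refl (fun z => ((z - z₀) ^ m)⁻¹) (𝓝[≠] z₀))
    refine hdiv.congr' ?_ ?_
    · filter_upwards [hfg.filter_mono nhdsWithin_le_nhds, self_mem_nhdsWithin] with z hz hne
      rw [hz, smul_eq_mul, mul_comm, inv_mul_cancel_left₀ (pow_ne_zero m (sub_ne_zero.2 hne))]
    · filter_upwards [self_mem_nhdsWithin] with z hne
      rw [pow_sub₀ _ (sub_ne_zero.2 hne) hlt.le]
  have htends : Tendsto (fun z => (z - z₀) ^ (s - m)) (𝓝[≠] z₀) (𝓝 0) := by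
    have hcont : ContinuousAt (fun z => (z - z₀) ^ (s - m)) z₀ := by fun_prop
    simpa [(Nat.sub_pos_of_lt hlt).ne'] using hcont.tendsto.mono_left nhdsWithin_le_nhds
  exact hg₀ (tendsto_nhds_unique (hg.continuousAt.tendsto.mono_left nhdsWithin_le_nhds)
    (hgO.trans_tendsto htends))

theorem taylorCoeff_eq_zero_of_isBigO [CharZero 𝕜] [CompleteSpace 𝕜] {s : ℕ}
    (hf : AnalyticAt 𝕜 f z₀) (hO : f =O[𝓝[≠] z₀] fun z => (z - z₀) ^ s) (hn : n < s) :
    taylorCoeff n f z₀ = 0 := by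
  rw [taylorCoeff, (natCast_le_analyticOrderAt_iff_iteratedDeriv_eq_zero hf).1
    (natCast_le_analyticOrderAt_of_isBigO hf hO) n hn, zero_div]

end Taylor

section BlockPoly

/-- The polynomial `Σ_{l < s} (z - z₀)^l v_{l+1}` generating the vectors `v₁, …, v_s` attached to a
block at `z₀`; vectors are numbered from `1`, as in the blocks. -/
def blockPoly {𝕜 E : Type*} [Ring 𝕜] [AddCommMonoid E] [Module 𝕜 E] (s : ℕ) (z₀ : 𝕜) (v : ℕ → E)
    (z : 𝕜) : E :=
  ∑ l ∈ Finset.range s, (z - z₀) ^ l • v (l + 1)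

theorem blockPoly_self {𝕜 E : Type*} [Ring 𝕜] [AddCommMonoid E] [Module 𝕜 E] {s : ℕ} (hs : 1 ≤ s)
    (z₀ : 𝕜) (v : ℕ → E) : blockPoly s z₀ v z₀ = v 1 := by
  rw [blockPoly, Finset.sum_eq_single_of_mem 0 (Finset.mem_range.2 hs)]
  · simp
  · intro l _ hl
    simp [hl]

theorem blockPoly_apply {𝕜 ι : Type*} [Ring 𝕜] (s : ℕ) (z₀ : 𝕜) (v : ℕ → ι → 𝕜) (z : 𝕜) (i : ι) :
    blockPoly s z₀ v z i = blockPoly s z₀ (fun l => v l i) z := by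
  simp only [blockPoly, Finset.sum_apply, Pi.smul_apply]

theorem dotProduct_blockPoly {𝕜 ι : Type*} [CommRing 𝕜] [Fintype ι] (s : ℕ) (z₀ : 𝕜) (u : ι → 𝕜)
    (v : ℕ → ι → 𝕜) (z : 𝕜) :
    u ⬝ᵥ blockPoly s z₀ v z = blockPoly s z₀ (fun l => u ⬝ᵥ v l) z := by
  simp only [blockPoly, dotProduct_sum, dotProduct_smul]

theorem vecMulVec_blockPoly {𝕜 m n : Type*} [CommRing 𝕜] (s : ℕ) (z₀ : 𝕜) (p : ℕ → m → 𝕜)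
    (q : ℕ → n → 𝕜) (z : 𝕜) : vecMulVec (blockPoly s z₀ p z) (blockPoly s z₀ q z) =
      ∑ a ∈ Finset.range s, ∑ b ∈ Finset.range s,
        ((z - z₀) ^ a * (z - z₀) ^ b) • vecMulVec (p (b + 1)) (q (a + 1)) := by
  ext i j
  simp only [vecMulVec_apply, blockPoly_apply, Matrix.sum_apply, Matrix.smul_apply, smul_eq_mul]
  rw [Finset.sum_comm]
  simp only [blockPoly, smul_eq_mul, Finset.sum_mul_sum]
  exact Finset.sum_congr rfl fun b _ => Finset.sum_congr rfl fun a _ => by ring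

variable {𝕜 : Type*} [NontriviallyNormedField 𝕜]

theorem analyticAt_blockPoly {E : Type*} [NormedAddCommGroup E] [NormedSpace 𝕜 E] (s : ℕ) (z₀ : 𝕜)
    (v : ℕ → E) (z : 𝕜) : AnalyticAt 𝕜 (blockPoly s z₀ v) z := by
  unfold blockPoly
  fun_prop

theorem tendsto_blockPoly {E : Type*} [NormedAddCommGroup E] [NormedSpace 𝕜 E] {s : ℕ} (hs : 1 ≤ s)
    (z₀ : 𝕜) (v : ℕ → E) : Tendsto (blockPoly s z₀ v) (𝓝[≠] z₀) (𝓝 (v 1)) := by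
  rw [← blockPoly_self hs z₀ v]
  exact (analyticAt_blockPoly s z₀ v z₀).continuousAt.tendsto.mono_left nhdsWithin_le_nhds

theorem taylorCoeff_blockPoly [CharZero 𝕜] {s n : ℕ} (hn : n < s) (z₀ : 𝕜) (c : ℕ → 𝕜) :
    taylorCoeff n (blockPoly s z₀ c) z₀ = c (n + 1) := by
  have hfac : (n.factorial : 𝕜) ≠ 0 := Nat.cast_ne_zero.2 n.factorial_ne_zero
  have hpow (l : ℕ) : taylorCoeff n (fun z => (z - z₀) ^ l * c (l + 1)) z₀ =
      if n = l then c (l + 1) else 0 := by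
    simp only [taylorCoeff, iteratedDeriv_mul_const_field,
      iteratedDeriv_comp_sub_const n (fun z => z ^ l), sub_self, iteratedDeriv_fun_pow_zero]
    split_ifs with h
    · subst h
      field_simp
    · simp
  unfold blockPoly
  simp only [smul_eq_mul]
  rw [taylorCoeff_sum fun l _ => by fun_prop]
  simp [hpow, hn]

end BlockPoly

section Blocks

variable {N r₁ : ℕ}

theorem upperBlock_eq_sum_range (s : ℕ) (κ : ℂ) (q p : ℕ → Fin N → ℂ) (k : ℂ) :
    upperBlock s κ q p k = ∑ a ∈ Finset.range s, ∑ b ∈ Finset.range (s - a),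
      (k - κ) ^ (-((s : ℤ) - a - b)) • vecMulVec (q (a + 1)) (p (b + 1)) := by
  rw [← Finset.sum_range_diag_flip s fun a b =>
    (k - κ) ^ (-((s : ℤ) - a - b)) • vecMulVec (q (a + 1)) (p (b + 1)), upperBlock,
    ← Finset.Ico_succ_right_eq_Icc, Finset.sum_Ico_eq_sum_range]
  refine Finset.sum_congr rfl fun l _ => ?_
  rw [← Finset.Ico_succ_right_eq_Icc, Finset.sum_Ico_eq_sum_range]
  refine Finset.sum_congr (by simp [add_comm]) fun a ha => ?_
  have hal : a ≤ l := by have := Finset.mem_range.1 ha; omega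
  congr 3 <;> grind

theorem lowerBlock_eq_transpose_upperBlock (s : ℕ) (κ : ℂ) (p q : ℕ → Fin N → ℂ) (k : ℂ) :
    lowerBlock s κ p q k = (upperBlock s κ q p k)ᵀ := by
  simp only [lowerBlock, upperBlock, transpose_sum, transpose_smul, transpose_vecMulVec]

theorem lowerBlock_eq_sum_range (s : ℕ) (κ : ℂ) (p q : ℕ → Fin N → ℂ) (k : ℂ) :
    lowerBlock s κ p q k = ∑ a ∈ Finset.range s, ∑ b ∈ Finset.range (s - a),
      (k - κ) ^ (-((s : ℤ) - a - b)) • vecMulVec (p (b + 1)) (q (a + 1)) := by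
  simp only [lowerBlock_eq_transpose_upperBlock, upperBlock_eq_sum_range, transpose_sum,
    transpose_smul, transpose_vecMulVec]

theorem continuousAt_lowerBlock {s : ℕ} {κ k₀ : ℂ} (h : k₀ ≠ κ) (p q : ℕ → Fin N → ℂ) :
    ContinuousAt (lowerBlock s κ p q) k₀ := by
  have hsub : k₀ - κ ≠ 0 := sub_ne_zero.2 h
  unfold lowerBlock
  fun_prop (disch := exact .inl hsub)

theorem exists_continuous_lowerBlock_add_eq (s : ℕ) (κ : ℂ) (p q : ℕ → Fin N → ℂ) :
    ∃ R : ℂ → Matrix (Fin N) (Fin N) ℂ, Continuous R ∧ ∀ k ≠ κ, lowerBlock s κ p q k + R k =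
      ((k - κ) ^ s)⁻¹ • vecMulVec (blockPoly s κ p k) (blockPoly s κ q k) := by
  refine ⟨fun k => ∑ a ∈ Finset.range s, ∑ b ∈ Finset.Ico (s - a) s,
    (k - κ) ^ (a + b - s) • vecMulVec (p (b + 1)) (q (a + 1)), by fun_prop, fun k hk => ?_⟩
  have hk : k - κ ≠ 0 := sub_ne_zero.2 hk
  have hlow (a b : ℕ) : (k - κ) ^ (-((s : ℤ) - a - b)) =
      ((k - κ) ^ s)⁻¹ * ((k - κ) ^ a * (k - κ) ^ b) := by
    rw [show -((s : ℤ) - a - b) = -(s : ℤ) + (a + b) by ring, zpow_add₀ hk, zpow_add₀ hk]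
    simp
  have hhigh (a b : ℕ) (hb : s - a ≤ b) : (k - κ) ^ (a + b - s) =
      ((k - κ) ^ s)⁻¹ * ((k - κ) ^ a * (k - κ) ^ b) := by
    rw [pow_sub₀ _ hk (by omega), pow_add, mul_comm]
  rw [lowerBlock_eq_sum_range, ← Finset.sum_add_distrib, vecMulVec_blockPoly, Finset.smul_sum]
  refine Finset.sum_congr rfl fun a _ => ?_
  rw [Finset.smul_sum, ← Finset.sum_range_add_sum_Ico _ (Nat.sub_le s a)]
  congr 1
  · exact Finset.sum_congr rfl fun b _ => by rw [hlow, smul_smul]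
  · exact Finset.sum_congr rfl fun b hb => by rw [hhigh a b (Finset.mem_Ico.1 hb).1, smul_smul]

theorem exists_continuousAt_lowerBlock_eq (s : ℕ) (κ κ₀ : ℂ) (p q : ℕ → Fin N → ℂ) :
    ∃ R : ℂ → Matrix (Fin N) (Fin N) ℂ, ContinuousAt R κ₀ ∧ ∀ k ≠ κ₀, lowerBlock s κ p q k =
      R k + if κ = κ₀ then
        ((k - κ₀) ^ s)⁻¹ • vecMulVec (blockPoly s κ₀ p k) (blockPoly s κ₀ q k) else 0 := by
  obtain rfl | hκ := eq_or_ne κ κ₀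
  · obtain ⟨R, hR, hlower⟩ := exists_continuous_lowerBlock_add_eq s κ p q
    refine ⟨-R, hR.neg.continuousAt, fun k hk => ?_⟩
    rw [if_pos rfl, ← hlower k hk, Pi.neg_apply]
    abel
  · exact ⟨lowerBlock s κ p q, continuousAt_lowerBlock hκ.symm p q, by simp [hκ]⟩

/-- The matrix whose columns are the vectors `p^{(ν)}_1, …, p^{(ν)}_{s_ν}` of all the blocks, so
that `P = blockCols s p` and `P̄ = (blockCols s p̄)ᵀ`; the `0`-based index `(ν, a)` stands for the
vector `p^{(ν)}_{a+1}`. -/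
def blockCols {𝕜 ι J : Type*} (s : J → ℕ) (p : J → ℕ → ι → 𝕜) :
    Matrix ι ((ν : J) × Fin (s ν)) 𝕜 :=
  of fun i x => p x.1 (x.2 + 1) i

theorem DbarMat_mulVec_apply (s : Fin r₁ → ℕ) (κb : Fin r₁ → ℂ) (k : ℂ) (w : Fin r₁ → ℕ → ℂ)
    (x : (ν : Fin r₁) × Fin (s ν)) :
    (DbarMat s κb k *ᵥ fun y => w y.1 y.2) x = ∑ b ∈ Finset.range (x.2 + 1),
      (k - κb x.1) ^ (-((x.2 : ℤ) - b + 1)) * w x.1 b := by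
  obtain ⟨ν, a⟩ := x
  simp only [mulVec, dotProduct, DbarMat, of_apply, Fintype.sum_sigma]
  rw [Finset.sum_eq_single_of_mem ν (Finset.mem_univ ν) fun μ _ hμ => by simp [hμ.symm]]
  simp only [true_and, ite_mul, zero_mul]
  rw [Fin.sum_univ_eq_sum_range fun b => if b ≤ (a : ℕ) then
    (k - κb ν) ^ (-((a : ℤ) - b + 1)) * w ν b else 0, ← Finset.sum_filter]
  exact Finset.sum_congr (by grind) fun _ _ => rfl

theorem sum_upperBlock (s : Fin r₁ → ℕ) (κb : Fin r₁ → ℂ) (qb pb : Fin r₁ → ℕ → Fin N → ℂ)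
    (k : ℂ) : ∑ ν, upperBlock (s ν) (κb ν) (qb ν) (pb ν) k =
      blockCols s (fun ν a => qb ν (s ν + 1 - a)) * (DbarMat s κb k * (blockCols s pb)ᵀ) := by
  ext i j
  have hDP (x : (ν : Fin r₁) × Fin (s ν)) : (DbarMat s κb k * (blockCols s pb)ᵀ) x j =
      ∑ b ∈ Finset.range (x.2 + 1),
        (k - κb x.1) ^ (-((x.2 : ℤ) - b + 1)) * pb x.1 (b + 1) j :=
    DbarMat_mulVec_apply s κb k (fun ν b => pb ν (b + 1) j) x
  rw [Matrix.sum_apply, Matrix.mul_apply, Fintype.sum_sigma]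
  refine Finset.sum_congr rfl fun ν _ => ?_
  simp only [hDP]
  simp only [blockCols, of_apply, Nat.add_sub_add_right]
  rw [Fin.sum_univ_eq_sum_range fun a => qb ν (s ν - a) i * ∑ b ∈ Finset.range (a + 1),
    (k - κb ν) ^ (-((a : ℤ) - b + 1)) * pb ν (b + 1) j, ← Finset.sum_range_reflect,
    upperBlock_eq_sum_range]
  simp only [Matrix.sum_apply, Matrix.smul_apply, vecMulVec_apply, smul_eq_mul, Finset.mul_sum]
  refine Finset.sum_congr rfl fun a ha => ?_
  have ha : a < s ν := Finset.mem_range.1 ha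
  refine Finset.sum_congr (by congr 1; omega) fun b _ => ?_
  rw [show s ν - (s ν - 1 - a) = a + 1 by omega,
    show -((s ν : ℤ) - a - b) = -(((s ν - 1 - a : ℕ) : ℤ) - b + 1) by omega]
  ring

theorem analyticAt_DbarMat_apply (s : Fin r₁ → ℕ) {κb : Fin r₁ → ℂ} {z : ℂ}
    (hz : ∀ ν, z ≠ κb ν) (x y : (ν : Fin r₁) × Fin (s ν)) :
    AnalyticAt ℂ (fun k => DbarMat s κb k x y) z := by
  have hsub : z - κb x.1 ≠ 0 := sub_ne_zero.2 (hz x.1)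
  simp only [DbarMat, of_apply]
  split_ifs
  · exact (analyticAt_id.sub analyticAt_const).fun_zpow hsub
  · exact analyticAt_const

theorem continuousAt_DbarMat (s : Fin r₁ → ℕ) {κb : Fin r₁ → ℂ} {z : ℂ} (hz : ∀ ν, z ≠ κb ν) :
    ContinuousAt (DbarMat s κb) z :=
  continuousAt_pi.2 fun x => continuousAt_pi.2 fun y =>
    (analyticAt_DbarMat_apply s hz x y).continuousAt

theorem Hmat_mul_Qbar_apply (sν sμ : ℕ) (pbν pμ : ℕ → Fin N → ℂ) (j l : ℕ) (a : Fin sν)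
    (n : Fin sμ) : (Hmat sν j * Qbar sν sμ pbν pμ l) a n =
      if j ≤ a ∧ l ≤ n then pbν (a - j + 1) ⬝ᵥ pμ (n - l + 1) else 0 := by
  simp only [Matrix.mul_apply, Hmat, Qbar, of_apply, ite_mul, one_mul, zero_mul]
  by_cases hj : j ≤ (a : ℕ)
  · rw [Finset.sum_eq_single_of_mem ⟨a - j, by omega⟩ (Finset.mem_univ _) fun b _ hb =>
      if_neg fun h => hb (Fin.ext (by simp [h])), if_pos (by simp [hj])]
    grind
  · rw [if_neg (fun h => hj h.1)]
    exact Finset.sum_eq_zero fun b _ => if_neg (by omega)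

theorem Kbar_apply (s : Fin r₁ → ℕ) (κ κb : Fin r₁ → ℂ) (pb p : Fin r₁ → ℕ → Fin N → ℂ)
    (x y : (ν : Fin r₁) × Fin (s ν)) :
    Kbar s κ κb pb p x y = ∑ j ∈ Finset.range (x.2 + 1), ∑ l ∈ Finset.range (y.2 + 1),
      (-1) ^ l * (j + l).factorial / (j.factorial * l.factorial) *
        (κ y.1 - κb x.1) ^ (-((j : ℤ) + l + 1)) *
          (pb x.1 (x.2 - j + 1) ⬝ᵥ p y.1 (y.2 - l + 1)) := by
  obtain ⟨ν, a⟩ := x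
  obtain ⟨μ, n⟩ := y
  have hrange {m : ℕ} (i : Fin m) :
      Finset.range (i + 1) = {j ∈ Finset.range m | j ≤ (i : ℕ)} := by
    grind
  simp only [Kbar, KbarBlock, of_apply, Matrix.sum_apply, Matrix.smul_apply, smul_eq_mul,
    Hmat_mul_Qbar_apply, hrange, Finset.sum_filter, ite_and, mul_ite, mul_zero]
  exact Finset.sum_congr rfl fun j _ => by split_ifs <;> simp

theorem Kbar_apply_eq_taylorCoeff {s : Fin r₁ → ℕ} {κ κb : Fin r₁ → ℂ} (hκ : ∀ μ ν, κ μ ≠ κb ν)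
    (pb p : Fin r₁ → ℕ → Fin N → ℂ) (x y : (ν : Fin r₁) × Fin (s ν)) :
    Kbar s κ κb pb p x y = taylorCoeff y.2 (fun k => (DbarMat s κb k *ᵥ
      ((blockCols s pb)ᵀ *ᵥ blockPoly (s y.1) (κ y.1) (p y.1) k)) x) (κ y.1) := by
  obtain ⟨ν, a⟩ := x
  obtain ⟨μ, n⟩ := y
  have hDP (k : ℂ) : (DbarMat s κb k *ᵥ
      ((blockCols s pb)ᵀ *ᵥ blockPoly (s μ) (κ μ) (p μ) k)) ⟨ν, a⟩ =
      ∑ b ∈ Finset.range (a + 1), (k - κb ν) ^ (-((a : ℤ) - b + 1)) *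
        blockPoly (s μ) (κ μ) (fun l => pb ν (b + 1) ⬝ᵥ p μ l) k := by
    simp only [← dotProduct_blockPoly]
    exact DbarMat_mulVec_apply s κb k
      (fun ν b => pb ν (b + 1) ⬝ᵥ blockPoly (s μ) (κ μ) (p μ) k) ⟨ν, a⟩
  have hzpow (m : ℤ) : ContDiffAt ℂ n (fun k => (k - κb ν) ^ m) (κ μ) :=
    ((analyticAt_id.sub analyticAt_const).fun_zpow (sub_ne_zero.2 (hκ μ ν))).contDiffAt
  have hpoly (c : ℕ → ℂ) : ContDiffAt ℂ n (blockPoly (s μ) (κ μ) c) (κ μ) :=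
    (analyticAt_blockPoly (s μ) (κ μ) c (κ μ)).contDiffAt
  simp only [hDP]
  rw [taylorCoeff_sum fun b _ => (hzpow _).mul (hpoly _), ← Finset.sum_range_reflect, Kbar_apply]
  refine Finset.sum_congr rfl fun j hj => ?_
  have hj : j ≤ a := Finset.mem_range_succ_iff.1 hj
  rw [show -((a : ℤ) - ((a + 1 - 1 - j : ℕ) : ℤ) + 1) = -((j : ℤ) + 1) by omega,
    show (a : ℕ) + 1 - 1 - j = a - j by omega, taylorCoeff_mul (hzpow _) (hpoly _)]
  refine Finset.sum_congr rfl fun l _ => ?_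
  rw [taylorCoeff_sub_zpow_neg_succ, taylorCoeff_blockPoly (by omega)]

theorem isBigO_one_of_tendsto_sum_vecMulVec {α ι m n 𝕜 : Type*} [Fintype ι] [Finite n]
    [NontriviallyNormedField 𝕜] [CompleteSpace 𝕜] {l : Filter α} {u : ι → α → m → 𝕜}
    {v : ι → α → n → 𝕜} {w : ι → n → 𝕜} {C : Matrix m n 𝕜}
    (hsum : Tendsto (fun x => ∑ i, vecMulVec (u i x) (v i x)) l (𝓝 C))
    (hv : ∀ i, Tendsto (v i) l (𝓝 (w i))) (hw : LinearIndependent 𝕜 w) (i : ι) (r : m) :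
    (fun x => u i x r) =O[l] fun _ => (1 : 𝕜) := by
  cases nonempty_fintype n
  have hrow : Tendsto (fun x => ∑ i, u i x r • v i x) l (𝓝 (C r)) := by
    refine (tendsto_pi_nhds.1 hsum r).congr fun x => ?_
    ext c
    simp only [Matrix.sum_apply, vecMulVec_apply, Finset.sum_apply, Pi.smul_apply, smul_eq_mul]
  have hcoef : (fun x i => u i x r) =O[l] fun x => ∑ i, u i x r • v i x :=
    isBigO_linearCombination_of_tendsto hv hw fun x i => u i x r
  exact (isBigO_pi.1 hcoef i).trans (hrow.isBigO_one 𝕜)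

theorem isBigO_mulVec_blockPoly {s : Fin r₁ → ℕ} (hs : ∀ ν, 1 ≤ s ν) {κ : Fin r₁ → ℂ} {κ₀ : ℂ}
    {p q : Fin r₁ → ℕ → Fin N → ℂ} {A : ℂ → Matrix (Fin N) (Fin N) ℂ} (hA : ContinuousAt A κ₀)
    (hinv : ∀ᶠ k in 𝓝[≠] κ₀, A k * (1 + ∑ ν, lowerBlock (s ν) (κ ν) (p ν) (q ν) k) = 1)
    (hq : LinearIndependent ℂ fun ν : {ν // κ ν = κ₀} => q ν 1) {μ : Fin r₁} (hμ : κ μ = κ₀)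
    (i : Fin N) :
    (fun k => (A k *ᵥ blockPoly (s μ) κ₀ (p μ) k) i) =O[𝓝[≠] κ₀] fun k => (k - κ₀) ^ s μ := by
  choose R hR hlower using fun ν =>
    exists_continuousAt_lowerBlock_eq (s ν) (κ ν) κ₀ (p ν) (q ν)
  have hcont : ContinuousAt (fun k => 1 - A k * (1 + ∑ ν, R ν k)) κ₀ := by fun_prop
  have hpolar : ∀ᶠ k in 𝓝[≠] κ₀, 1 - A k * (1 + ∑ ν, R ν k) =
      ∑ ν : {ν // κ ν = κ₀}, vecMulVec
        (((k - κ₀) ^ s ν)⁻¹ • A k *ᵥ blockPoly (s ν) κ₀ (p ν) k)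
        (blockPoly (s ν) κ₀ (q ν) k) := by
    filter_upwards [hinv, self_mem_nhdsWithin] with k hk hne
    simp only [hlower _ k hne, Finset.sum_add_distrib, ← Finset.sum_filter] at hk
    rw [← add_assoc, mul_add] at hk
    rw [sub_eq_of_eq_add' hk.symm, Finset.mul_sum]
    simp only [Matrix.mul_smul, mul_vecMulVec, smul_vecMulVec]
    exact Finset.sum_subtype _ (by simp) _
  have hbdd := isBigO_one_of_tendsto_sum_vecMulVec
    ((hcont.tendsto.mono_left nhdsWithin_le_nhds).congr' hpolar)
    (fun ν => tendsto_blockPoly (hs ν) κ₀ (q ν)) hq ⟨μ, hμ⟩ i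
  have hmul := (isBigO_refl (fun k => (k - κ₀) ^ s μ) (𝓝[≠] κ₀)).mul hbdd
  refine hmul.congr' ?_ (by simp)
  filter_upwards [self_mem_nhdsWithin] with k hne
  have hsub : k - κ₀ ≠ 0 := sub_ne_zero.2 hne
  simp [hsub]

theorem mul_Kbar_eq_neg {s : Fin r₁ → ℕ} {κ κb : Fin r₁ → ℂ} (hκ : ∀ μ ν, κ μ ≠ κb ν)
    (pb p : Fin r₁ → ℕ → Fin N → ℂ) (B : Matrix (Fin N) ((ν : Fin r₁) × Fin (s ν)) ℂ)
    (hO : ∀ μ i, (fun k => ((1 + B * (DbarMat s κb k * (blockCols s pb)ᵀ)) *ᵥ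
      blockPoly (s μ) (κ μ) (p μ) k) i) =O[𝓝[≠] κ μ] fun k => (k - κ μ) ^ s μ) :
    B * Kbar s κ κb pb p = -blockCols s p := by
  ext i ⟨μ, n⟩
  have hp (c : ℕ → ℂ) : AnalyticAt ℂ (blockPoly (s μ) (κ μ) c) (κ μ) :=
    analyticAt_blockPoly (s μ) (κ μ) c (κ μ)
  have hD (x : (ν : Fin r₁) × Fin (s ν)) : AnalyticAt ℂ (fun k => (DbarMat s κb k *ᵥ
      ((blockCols s pb)ᵀ *ᵥ blockPoly (s μ) (κ μ) (p μ) k)) x) (κ μ) := by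
    refine Finset.analyticAt_fun_sum _ fun y _ => (analyticAt_DbarMat_apply s (hκ μ) x y).mul ?_
    exact (hp _).congr (.of_forall fun k => (dotProduct_blockPoly _ _ _ _ _).symm)
  have hB : AnalyticAt ℂ (fun k => B i ⬝ᵥ (DbarMat s κb k *ᵥ
      ((blockCols s pb)ᵀ *ᵥ blockPoly (s μ) (κ μ) (p μ) k))) (κ μ) :=
    Finset.analyticAt_fun_sum _ fun x _ => analyticAt_const.mul (hD x)
  have hsplit (k : ℂ) : ((1 + B * (DbarMat s κb k * (blockCols s pb)ᵀ)) *ᵥ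
      blockPoly (s μ) (κ μ) (p μ) k) i = blockPoly (s μ) (κ μ) (fun l => p μ l i) k +
        B i ⬝ᵥ (DbarMat s κb k *ᵥ ((blockCols s pb)ᵀ *ᵥ blockPoly (s μ) (κ μ) (p μ) k)) := by
    rw [add_mulVec, one_mulVec, Pi.add_apply, blockPoly_apply, ← mulVec_mulVec, ← mulVec_mulVec]
    rfl
  have hzero := taylorCoeff_eq_zero_of_isBigO (n := n)
    ((hp _).fun_add hB) ((hO μ i).congr_left hsplit) n.isLt
  rw [taylorCoeff_add (hp _).contDiffAt hB.contDiffAt, taylorCoeff_blockPoly n.isLt,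
    taylorCoeff_dotProduct _ fun x => (hD x).contDiffAt] at hzero
  simp only [← Kbar_apply_eq_taylorCoeff hκ pb p _ ⟨μ, n⟩] at hzero
  exact eq_neg_of_add_eq_zero_right hzero

end Blocks

/-- summation representation of the soliton matrix.  If `Γ(k)Γinv(k) = I` away
from the poles, the rows `{q^{(ν)}_1 : κ_ν = κ}` are linearly independent at each point `κ`,
and `K̄` is invertible, then `Γ(k) = I − P·K̄⁻¹·𝒟̄(k)·P̄` for every `k` not among the `κ̄_ν`. -/
theorem stmt4 (N r₁ : ℕ) (hN : 1 ≤ N) (hr₁ : 1 ≤ r₁)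
    (s : Fin r₁ → ℕ) (hs : ∀ ν, 1 ≤ s ν)
    (κ κb : Fin r₁ → ℂ) (hκ : ∀ μ ν, κ μ ≠ κb ν)
    (qb pb p q : Fin r₁ → ℕ → Fin N → ℂ)
    (Γ Γinv : ℂ → Matrix (Fin N) (Fin N) ℂ)
    (hΓ : ∀ k, Γ k = 1 + ∑ ν : Fin r₁, upperBlock (s ν) (κb ν) (qb ν) (pb ν) k)
    (hΓinv : ∀ k, Γinv k = 1 + ∑ ν : Fin r₁, lowerBlock (s ν) (κ ν) (p ν) (q ν) k)
    (hprod : ∀ k : ℂ, (∀ ν, k ≠ κ ν) → (∀ ν, k ≠ κb ν) → Γ k * Γinv k = 1)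
    (hindep : ∀ κ₀ : ℂ, LinearIndependent ℂ fun ν : {ν : Fin r₁ // κ ν = κ₀} => q ν.1 1)
    (hKunit : IsUnit (Kbar s κ κb pb p))
    (Pmat : Matrix (Fin N) ((ν : Fin r₁) × Fin (s ν)) ℂ)
    (hPmat : ∀ i x, Pmat i x = p x.1 ((x.2 : ℕ) + 1) i)
    (Pbmat : Matrix ((ν : Fin r₁) × Fin (s ν)) (Fin N) ℂ)
    (hPbmat : ∀ x i, Pbmat x i = pb x.1 ((x.2 : ℕ) + 1) i) :
    ∀ k : ℂ, (∀ ν, k ≠ κb ν) →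
      Γ k = 1 - Pmat * ((Kbar s κ κb pb p)⁻¹ * (DbarMat s κb k * Pbmat)) := by
  obtain rfl : Pmat = blockCols s p := Matrix.ext hPmat
  obtain rfl : Pbmat = (blockCols s pb)ᵀ := Matrix.ext hPbmat
  set B := blockCols s fun ν a => qb ν (s ν + 1 - a)
  have hΓD (k : ℂ) : Γ k = 1 + B * (DbarMat s κb k * (blockCols s pb)ᵀ) := by
    rw [hΓ, sum_upperBlock]
  have hΓcont (μ : Fin r₁) : ContinuousAt Γ (κ μ) := by
    have hD := continuousAt_DbarMat s (hκ μ)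
    rw [funext hΓD]
    fun_prop
  have hinv (μ : Fin r₁) : ∀ᶠ k in 𝓝[≠] κ μ,
      Γ k * (1 + ∑ ν, lowerBlock (s ν) (κ ν) (p ν) (q ν) k) = 1 := by
    filter_upwards [eventually_nhdsNE_forall_ne κ (κ μ), eventually_nhdsNE_forall_ne κb (κ μ)]
      with k hk hkb using hΓinv k ▸ hprod k hk hkb
  have hBK : B * Kbar s κ κb pb p = -blockCols s p := by
    refine mul_Kbar_eq_neg hκ pb p B fun μ i => ?_
    simp only [← hΓD]
    exact isBigO_mulVec_blockPoly hs (hΓcont μ) (hinv μ) (hindep (κ μ)) rfl i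
  have hB : B = -blockCols s p * (Kbar s κ κb pb p)⁻¹ := by
    rw [← hBK, mul_nonsing_inv_cancel_right _ _ ((isUnit_iff_isUnit_det _).1 hKunit)]
  intro k _
  rw [hΓD, hB, Matrix.mul_assoc, Matrix.neg_mul, ← sub_eq_add_neg]
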